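/- arXiv:2503.12766 — 8 statements merged into one kernel-verified Lean document; each statement's English description precedes it below -/
import Mathlib

section
/- Let P and Q be posets. If the product space ΣP × ΣQ (the product of P and Q each equipped with the Scott topology) is a Fréchet space, then the Scott topology on the product poset P × Q coincides with the product topology of ΣP and ΣQ. -/
/-!
Let `α` carry its Scott topology and let `f : α × X → Z` be separately continuous. If `K ⊆ X` is
compact and `V ⊆ Z` is open, then `{a | f (a, ·) maps K into V}` is Scott open: when it contains a
directed supremum `⨆ d`, the open sets `f (e, ·) ⁻¹' V`, `e ∈ d`, form a directed cover of `K`, so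
one of them contains `K`. Hence `a ↦ f (a, ·)` is continuous for the compact-open topology, and `f`
is jointly continuous when `X` is locally compact. Testing along maps from compact Hausdorff spaces,
which are locally compact, `f` is also jointly continuous as soon as `α × X` is compactly generated.
This applies to the identity from `ΣP × ΣQ` to `Σ(P × Q)`, since `p ↦ (p, q)` and `q ↦ (p, q)`
preserve directed suprema.
-/

open Topology Set

section ScottContinuous

variable {α β : Type*} [Preorder α] [TopologicalSpace α] [IsScott α univ]
  [Preorder β] [TopologicalSpace β] [IsScott β univ]

theorem continuous_of_scottContinuous {f : α → β} (hf : ScottContinuous f) : Continuous f :=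
  (IsScott.scottContinuousOn_iff_continuous fun _ _ _ ↦ mem_univ _).1 (scottContinuousOn_univ.2 hf)

end ScottContinuous

section SeparatelyContinuous

universe u

variable {α X Z : Type*} [Preorder α] [TopologicalSpace α] [IsScott α univ]
  [TopologicalSpace X] [TopologicalSpace Z]

theorem isOpen_setOf_mapsTo_of_isCompact {F : α → C(X, Z)} (hF : ∀ x, Continuous (F · x))
    {K : Set X} (hK : IsCompact K) {V : Set Z} (hV : IsOpen V) : IsOpen {a | MapsTo (F a) K V} := by
  have slice_open (x : X) : IsUpperSet {a | F a x ∈ V} ∧ DirSupInacc {a | F a x ∈ V} := by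
    rw [← dirSupInaccOn_univ, ← IsScott.isOpen_iff_isUpperSet_and_dirSupInaccOn]
    exact hV.preimage (hF x)
  have mono {a b : α} (hab : a ≤ b) : F a ⁻¹' V ⊆ F b ⁻¹' V := fun x hx ↦ (slice_open x).1 hab hx
  rw [IsScott.isOpen_iff_isUpperSet_and_dirSupInaccOn (D := univ), dirSupInaccOn_univ]
  refine ⟨fun a b hab ha ↦ Subset.trans ha (mono hab), fun d hd hdir a ha haK ↦ ?_⟩
  have : Nonempty d := hd.to_subtype
  have cover : K ⊆ ⋃ e : d, F e ⁻¹' V := fun x hx ↦ by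
    obtain ⟨e, he, heV⟩ := (slice_open x).2 hd hdir ha (haK hx)
    exact mem_iUnion.2 ⟨⟨e, he⟩, heV⟩
  have directed : Directed (· ⊆ ·) fun e : d ↦ F e ⁻¹' V :=
    Directed.mono_comp (· ≤ ·) (g := fun a ↦ F a ⁻¹' V) (fun _ _ hab ↦ mono hab) hdir.directed_val
  obtain ⟨⟨e, he⟩, heK⟩ :=
    hK.elim_directed_cover _ (fun e : d ↦ hV.preimage (F e).continuous) cover directed
  exact ⟨e, he, heK⟩

theorem continuous_of_forall_continuous_apply {F : α → C(X, Z)} (hF : ∀ x, Continuous (F · x)) :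
    Continuous F :=
  ContinuousMap.continuous_compactOpen.2 fun _ hK _ hV ↦ isOpen_setOf_mapsTo_of_isCompact hF hK hV

theorem continuous_of_separatelyContinuous_of_locallyCompactSpace [LocallyCompactSpace X]
    {f : α × X → Z} (hleft : ∀ x, Continuous fun a ↦ f (a, x))
    (hright : ∀ a, Continuous fun x ↦ f (a, x)) : Continuous f :=
  ContinuousMap.continuous_uncurry_of_continuous
    ⟨fun a ↦ ⟨fun x ↦ f (a, x), hright a⟩, continuous_of_forall_continuous_apply hleft⟩

theorem continuous_comp_of_separatelyContinuous_of_locallyCompactSpace {K : Type*}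
    [TopologicalSpace K] [LocallyCompactSpace K] {f : α × X → Z}
    (hleft : ∀ x, Continuous fun a ↦ f (a, x)) (hright : ∀ a, Continuous fun x ↦ f (a, x))
    {g : K → α × X} (hg : Continuous g) : Continuous (f ∘ g) := by
  have pullback : Continuous fun p : α × K ↦ f (p.1, (g p.2).2) :=
    continuous_of_separatelyContinuous_of_locallyCompactSpace (fun k ↦ hleft (g k).2)
      fun a ↦ (hright a).comp hg.snd
  exact pullback.comp (hg.fst.prodMk continuous_id)

theorem continuous_of_separatelyContinuous_of_uCompactlyGeneratedSpace
    [UCompactlyGeneratedSpace.{u} (α × X)] {f : α × X → Z}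
    (hleft : ∀ x, Continuous fun a ↦ f (a, x)) (hright : ∀ a, Continuous fun x ↦ f (a, x)) :
    Continuous f := by
  -- Instance search for `LocallyCompactSpace S` times out on the bundled `S : CompHaus`.
  have locallyCompact (K : Type u) [TopologicalSpace K] [CompactSpace K] [T2Space K] :
      LocallyCompactSpace K := inferInstance
  refine continuous_from_uCompactlyGeneratedSpace f fun S g ↦ ?_
  have : LocallyCompactSpace S := locallyCompact S
  exact continuous_comp_of_separatelyContinuous_of_locallyCompactSpace hleft hright g.continuous

end SeparatelyContinuous

section Prod

universe u

variable {P Q : Type*} [Preorder P] [Preorder Q] [TopologicalSpace P] [IsScott P univ]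
  [TopologicalSpace Q] [IsScott Q univ]

theorem continuous_ofScott_prod : Continuous (WithScott.ofScott : WithScott (P × Q) → P × Q) :=
  .prodMk (continuous_of_scottContinuous ScottContinuous.fst)
    (continuous_of_scottContinuous ScottContinuous.snd)

theorem continuous_toScott_prod [UCompactlyGeneratedSpace.{u} (P × Q)] :
    Continuous (WithScott.toScott : P × Q → WithScott (P × Q)) :=
  continuous_of_separatelyContinuous_of_uCompactlyGeneratedSpace
    (fun q ↦ continuous_of_scottContinuous (ScottContinuous.id.prodMk (.const q)))
    fun p ↦ continuous_of_scottContinuous (ScottContinuous.prodMk (.const p) .id)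

end Prod

theorem stmt0_general.{u} {P Q : Type*} [Preorder P] [Preorder Q]
    [TopologicalSpace P] [IsScott P univ] [TopologicalSpace Q] [IsScott Q univ]
    [UCompactlyGeneratedSpace.{u} (P × Q)] : IsScott (P × Q) univ where
  topology_eq_scott :=
    le_antisymm (continuous_id_iff_le.1 continuous_toScott_prod)
      (continuous_id_iff_le.1 continuous_ofScott_prod)

/-- Let P and Q be posets. If the product space ΣP × ΣQ (the product of P and Q
each equipped with the Scott topology) is a Fréchet space, then the Scott topology on the
product poset P × Q coincides with the product topology of ΣP and ΣQ. -/
theorem stmt0 {P Q : Type*} [PartialOrder P] [PartialOrder Q]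
    [TopologicalSpace P] [Topology.IsScott P Set.univ]
    [TopologicalSpace Q] [Topology.IsScott Q Set.univ]
    [FrechetUrysohnSpace (P × Q)] :
    Topology.IsScott (P × Q) Set.univ :=
  stmt0_general.{0}
end

section
/- Let P be a poset such that the product space ΣP × ΣP is a Fréchet space. If the Lawson space ΛP is compact, then ΣP is sober. -/
/-!
An irreducible Scott-closed set `F` is Lawson compact, so it has a maximal element `m`, and it
suffices that every `y ∈ F` lies below `m`. By irreducibility `(m, y)` is in the closure of the
diagonal of `F`, so the Fréchet property yields a sequence in `F` with Scott limits `m` and `y`.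
The lower closure of a Lawson compact set is Scott closed; with Lawson compactness this puts a
Lawson limit of any ultrafilter refining the sequence above `m`, and maximality in `F` forces that
limit to be `m`. So the sequence also converges to `m` in the Lawson topology. If `y ≰ m`, some tail
of the sequence together with `m` is Lawson compact and avoids `Ici y`, so its Scott-closed lower
closure does not contain the Scott limit `y`, a contradiction.
-/

open Set Filter Topology
open Topology.WithLawson (toLawson ofLawson)

section Compact

variable {Q : Type*} [Preorder Q] [TopologicalSpace Q] [ClosedIciTopology Q] {K : Set Q}

theorem exists_mem_upperBounds_of_isCompact_of_directedOn (hK : IsCompact K) {d : Set Q}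
    (hne : d.Nonempty) (hdir : DirectedOn (· ≤ ·) d) (hd : d ⊆ lowerClosure K) :
    ∃ k ∈ K, k ∈ upperBounds d := by
  have : Nonempty d := hne.to_subtype
  suffices (K ∩ ⋂ b : d, Ici (b : Q)).Nonempty by
    obtain ⟨k, hkK, hk⟩ := this
    exact ⟨k, hkK, fun b hb ↦ mem_iInter.1 hk ⟨b, hb⟩⟩
  by_contra! hempty
  have hanti : Directed (· ⊇ ·) fun b : d ↦ Ici (b : Q) := fun b c ↦ by
    obtain ⟨e, he, hbe, hce⟩ := hdir b b.2 c c.2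
    exact ⟨⟨e, he⟩, Ici_subset_Ici.2 hbe, Ici_subset_Ici.2 hce⟩
  obtain ⟨b, hb⟩ := hK.elim_directed_family_closed _ (fun _ ↦ isClosed_Ici) hempty hanti
  obtain ⟨k, hkK, hbk⟩ := hd b.2
  exact hb.subset ⟨hkK, hbk⟩

theorem dirSupClosed_lowerClosure_of_isCompact (hK : IsCompact K) :
    DirSupClosed (lowerClosure K : Set Q) := fun _ hd hne hdir _ ha ↦
  let ⟨k, hkK, hk⟩ := exists_mem_upperBounds_of_isCompact_of_directedOn hK hne hdir hd
  ⟨k, hkK, ha.2 hk⟩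

theorem exists_maximal_of_isCompact (hK : IsCompact K) (hne : K.Nonempty) :
    ∃ m, Maximal (· ∈ K) m := by
  obtain ⟨x, hx⟩ := hne
  obtain ⟨m, -, hm⟩ := zorn_le_nonempty₀ K (fun c hcK hc y hy ↦
    exists_mem_upperBounds_of_isCompact_of_directedOn hK ⟨y, hy⟩ hc.directedOn
      (hcK.trans subset_lowerClosure)) x hx
  exact ⟨m, hm⟩

end Compact

section Irreducible

variable {X : Type*} [TopologicalSpace X] {s : Set X}

theorem prod_self_subset_closure_image_diag (hs : IsPreirreducible s) :
    s ×ˢ s ⊆ closure ((fun p ↦ (p, p)) '' s) := by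
  rintro ⟨x, y⟩ ⟨hx, hy⟩
  refine mem_closure_iff.2 fun U hU hxy ↦ ?_
  obtain ⟨V, W, hV, hW, hxV, hyW, hVW⟩ := isOpen_prod_iff.1 hU x y hxy
  obtain ⟨p, hps, hpV, hpW⟩ := hs V W hV hW ⟨x, hx, hxV⟩ ⟨y, hy, hyW⟩
  exact ⟨(p, p), hVW ⟨hpV, hpW⟩, p, hps, rfl⟩

theorem exists_seq_tendsto_both_of_isPreirreducible [FrechetUrysohnSpace (X × X)]
    (hs : IsPreirreducible s) {x y : X} (hx : x ∈ s) (hy : y ∈ s) :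
    ∃ a : ℕ → X, (∀ n, a n ∈ s) ∧ Tendsto a atTop (𝓝 x) ∧ Tendsto a atTop (𝓝 y) := by
  obtain ⟨q, hqs, hq⟩ :=
    mem_closure_iff_seq_limit.1 (prod_self_subset_closure_image_diag hs (mk_mem_prod hx hy))
  choose a has haq using hqs
  obtain rfl : (fun n ↦ (a n, a n)) = q := funext haq
  exact ⟨a, has, hq.fst_nhds, hq.snd_nhds⟩

end Irreducible

instance closedIciTopology_of_isLawson {Q : Type*} [Preorder Q] [TopologicalSpace Q]
    [IsLawson Q] : ClosedIciTopology Q where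
  isClosed_Ici a := by
    have hlower : IsClosed (WithLower.ofLower ⁻¹' Ici a) := isClosed_Ici (a := WithLower.toLower a)
    rw [IsLawson.topology_eq_lawson (α := Q)]
    exact lawsonClosed_of_lowerClosed _ hlower

section Scott

variable {P : Type*} [TopologicalSpace P]

section Preorder

variable [Preorder P] [IsScott P univ]

theorem continuous_ofLawson : Continuous (ofLawson : WithLawson P → P) where
  isOpen_preimage U hU := by
    rw [IsScott.topology_eq P univ] at hU
    exact lawson_le_scott U hU

theorem isClosed_toLawson_preimage_lowerClosure {K : Set (WithLawson P)} (hK : IsCompact K) :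
    IsClosed (toLawson ⁻¹' (lowerClosure K : Set (WithLawson P))) := by
  have hsup := dirSupClosed_lowerClosure_of_isCompact hK
  exact IsScott.isClosed_iff_isLowerSet_and_dirSupClosed.2 ⟨(lowerClosure K).lower, hsup⟩

theorem exists_toLawson_le_of_frequently_mem {f : Filter (WithLawson P)}
    {K : Set (WithLawson P)} (hK : IsCompact K) {x : P} (hf : Tendsto ofLawson f (𝓝 x))
    (hfK : ∃ᶠ p in f, p ∈ K) : ∃ k ∈ K, toLawson x ≤ k :=
  (isClosed_toLawson_preimage_lowerClosure hK).mem_of_frequently_of_tendsto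
    (hfK.mono fun _ hp ↦ subset_lowerClosure hp) hf

theorem exists_toLawson_le_clusterPt [CompactSpace (WithLawson P)] {f : Filter (WithLawson P)}
    [NeBot f] {x : P} (hf : Tendsto ofLawson f (𝓝 x)) : ∃ z, toLawson x ≤ z ∧ ClusterPt z f := by
  by_contra! hnot
  have hdisj : Disjoint (𝓝ˢ (Ici (toLawson x))) f :=
    isClosed_Ici.isCompact.disjoint_nhdsSet_left.2 fun z hz ↦
      disjoint_iff.2 (not_neBot.1 (hnot z hz))
  obtain ⟨U, ⟨hU, hxU⟩, hUf⟩ := (hasBasis_nhdsSet _).disjoint_iff_left.1 hdisj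
  obtain ⟨k, hkU, hxk⟩ :=
    exists_toLawson_le_of_frequently_mem hU.isClosed_compl.isCompact hf (Eventually.frequently hUf)
  exact hkU (hxU hxk)

theorem toLawson_le_of_tendsto_of_tendsto {a : ℕ → WithLawson P} {x : WithLawson P} {y : P}
    (hx : Tendsto a atTop (𝓝 x)) (hy : Tendsto (fun n ↦ ofLawson (a n)) atTop (𝓝 y)) :
    toLawson y ≤ x := by
  by_contra hyx
  obtain ⟨N, hN⟩ := eventually_atTop.1 (hx.eventually_mem (isClosed_Ici.isOpen_compl.mem_nhds hyx))
  have hK : IsCompact (insert x (range fun n ↦ a (n + N))) :=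
    (hx.comp (tendsto_add_atTop_nat N)).isCompact_insert_range
  have hmem : ∀ᶠ n in atTop, a n ∈ insert x (range fun n ↦ a (n + N)) :=
    (eventually_ge_atTop N).mono fun n hn ↦ Or.inr ⟨n - N, by simp only [Nat.sub_add_cancel hn]⟩
  obtain ⟨k, rfl | ⟨n, rfl⟩, hyk⟩ :=
    exists_toLawson_le_of_frequently_mem hK (tendsto_map'_iff.2 hy) hmem.frequently
  · exact hyx hyk
  · exact hN (n + N) (Nat.le_add_left N n) hyk

theorem exists_maximal_of_isClosed_scott [CompactSpace (WithLawson P)] {F : Set P}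
    (hFc : IsClosed F) (hne : F.Nonempty) : ∃ m, Maximal (· ∈ F) m := by
  obtain ⟨m, hm⟩ := exists_maximal_of_isCompact (hFc.preimage continuous_ofLawson).isCompact hne
  exact ⟨ofLawson m, hm⟩

theorem isGenericPoint_of_isGreatest {F : Set P} {m : P}
    (hFc : IsClosed F) (hm : IsGreatest F m) : IsGenericPoint m F := by
  rw [IsGenericPoint, IsScott.closure_singleton]
  exact Subset.antisymm ((IsScott.isLowerSet_of_isClosed hFc).Iic_subset hm.1) hm.2

end Preorder

section PartialOrder

variable [PartialOrder P] [IsScott P univ] [CompactSpace (WithLawson P)] {F : Set P} {m : P}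

theorem le_nhds_toLawson_of_maximal (hFc : IsClosed F) (hm : Maximal (· ∈ F) m)
    {f : Filter (WithLawson P)} (hfF : ofLawson ⁻¹' F ∈ f) (hf : Tendsto ofLawson f (𝓝 m)) :
    f ≤ 𝓝 (toLawson m) := by
  refine le_iff_ultrafilter.2 fun u hu ↦ ?_
  obtain ⟨z, hmz, hz⟩ := exists_toLawson_le_clusterPt (hf.mono_left hu)
  have hzF : ofLawson z ∈ F := isClosed_iff_clusterPt.1 (hFc.preimage continuous_ofLawson) z
    (hz.mono (le_principal_iff.2 (hu hfF)))
  obtain rfl : m = ofLawson z := hm.eq_of_le hzF hmz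
  exact Ultrafilter.clusterPt_iff.1 hz

theorem isGreatest_of_maximal [FrechetUrysohnSpace (P × P)] (hF : IsPreirreducible F)
    (hFc : IsClosed F) (hm : Maximal (· ∈ F) m) : IsGreatest F m := by
  refine ⟨hm.prop, fun y hy ↦ ?_⟩
  obtain ⟨a, haF, ham, hay⟩ := exists_seq_tendsto_both_of_isPreirreducible hF hm.prop hy
  have hLawson : Tendsto (fun n ↦ toLawson (a n)) atTop (𝓝 (toLawson m)) :=
    le_nhds_toLawson_of_maximal hFc hm (eventually_map.2 (Eventually.of_forall haF))
      (tendsto_map'_iff.2 ham)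
  exact toLawson_le_of_tendsto_of_tendsto hLawson hay

end PartialOrder

end Scott

/-- Let P be a poset such that the product space ΣP × ΣP is a Fréchet space.
If the Lawson space ΛP is compact, then ΣP is sober. -/
theorem stmt1 {P : Type*} [PartialOrder P]
    [TopologicalSpace P] [Topology.IsScott P Set.univ]
    [FrechetUrysohnSpace (P × P)]
    (hLawsonCompact : @CompactSpace P (Topology.lawson P)) :
    T0Space P ∧ QuasiSober P := by
  have : CompactSpace (WithLawson P) := hLawsonCompact
  refine ⟨inferInstance, ⟨fun hF hFc ↦ ?_⟩⟩
  obtain ⟨m, hm⟩ := exists_maximal_of_isClosed_scott hFc hF.nonempty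
  exact ⟨m, isGenericPoint_of_isGreatest hFc (isGreatest_of_maximal hF.isPreirreducible hFc hm)⟩
end

section
/- Let P be a poset such that the product space ΣP × ΣP is a Fréchet space. If ΣP is well-filtered and coherent, then ΣP is sober. -/
/-- A subset of a topological space is saturated if it is the intersection of the open sets
containing it. -/
def IsSaturatedSet {X : Type*} [TopologicalSpace X] (A : Set X) : Prop :=
  A = ⋂₀ {U : Set X | IsOpen U ∧ A ⊆ U}

/-- A space is well-filtered if for every filtered family 𝓕 of compact saturated sets and every
open U with ⋂𝓕 ⊆ U, some member of 𝓕 is contained in U. -/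
def WellFiltered (X : Type*) [TopologicalSpace X] : Prop :=
  ∀ 𝓕 : Set (Set X), 𝓕.Nonempty → (∀ K ∈ 𝓕, IsCompact K ∧ IsSaturatedSet K) →
    DirectedOn (fun A B => B ⊆ A) 𝓕 →
    ∀ U : Set X, IsOpen U → ⋂₀ 𝓕 ⊆ U → ∃ K ∈ 𝓕, K ⊆ U

/-- A space is coherent if the intersection of any two compact saturated sets is compact. -/
def Coherent (X : Type*) [TopologicalSpace X] : Prop :=
  ∀ K Q : Set X, IsCompact K → IsSaturatedSet K → IsCompact Q → IsSaturatedSet Q →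
    IsCompact (K ∩ Q)

/-!
Let `A` be a closed irreducible set. For `a, b ∈ A` the point `(a, b)` lies in the closure of the
diagonal copy of `A`, so the Fréchet property gives one sequence `c` in `A` converging to both `a`
and `b`. The saturated tails of `c` with `a` adjoined are compact, and they shrink to the saturation
`↑a`; likewise for `b`. By coherence the tails for `a` and `b` have compact intersections, all of
which meet `A`, so by well-filteredness `A` meets `↑a ∩ ↑b`. Hence `A` is directed in the
specialization order, and well-filteredness applied to the saturations `↑a`, `a ∈ A`, yields a
greatest element of `A`, whose closure is `A`.
-/

open Filter Set Topology

section

variable {X : Type*} [TopologicalSpace X]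

theorem isSaturatedSet_iff_nhdsKer_eq {s : Set X} : IsSaturatedSet s ↔ nhdsKer s = s := by
  rw [IsSaturatedSet, nhdsKer_def, eq_comm]

theorem isSaturatedSet_nhdsKer (s : Set X) : IsSaturatedSet (nhdsKer s) :=
  isSaturatedSet_iff_nhdsKer_eq.2 (nhdsKer_nhdsKer s)

theorem IsSaturatedSet.inter {s t : Set X} (hs : IsSaturatedSet s) (ht : IsSaturatedSet t) :
    IsSaturatedSet (s ∩ t) := by
  rw [isSaturatedSet_iff_nhdsKer_eq] at hs ht ⊢
  refine Subset.antisymm ?_ subset_nhdsKer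
  calc nhdsKer (s ∩ t) ⊆ nhdsKer s ∩ nhdsKer t := nhdsKer_inter_subset
    _ = s ∩ t := by rw [hs, ht]

theorem WellFiltered.inter_iInter_nonempty (hwf : WellFiltered X) {ι : Sort*} [Nonempty ι]
    {K : ι → Set X} (hcomp : ∀ i, IsCompact (K i)) (hsat : ∀ i, IsSaturatedSet (K i))
    (hdir : Directed (· ⊇ ·) K) {A : Set X} (hA : IsClosed A) (hmeet : ∀ i, (A ∩ K i).Nonempty) :
    (A ∩ ⋂ i, K i).Nonempty := by
  by_contra hempty
  have hsub : ⋂₀ range K ⊆ Aᶜ := fun x hx hxA => hempty ⟨x, hxA, hx⟩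
  obtain ⟨_, ⟨i, rfl⟩, hi⟩ := hwf (range K) (range_nonempty K)
    (forall_mem_range.2 fun i => ⟨hcomp i, hsat i⟩) hdir.directedOn_range Aᶜ hA.isOpen_compl hsub
  obtain ⟨x, hxA, hxK⟩ := hmeet i
  exact hi hxK hxA

theorem WellFiltered.exists_isGenericPoint_of_directedOn (hwf : WellFiltered X) {A : Set X}
    (hne : A.Nonempty) (hA : IsClosed A) (hdir : DirectedOn (fun a b => b ⤳ a) A) :
    ∃ x, IsGenericPoint x A := by
  have := hne.to_subtype
  have hdirKer : Directed (· ⊇ ·) fun a : A => nhdsKer {(a : X)} :=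
    fun a b => (hdir.directed_val a b).imp fun _ => And.imp
      specializes_iff_nhdsKer_subset.1 specializes_iff_nhdsKer_subset.1
  obtain ⟨x, hxA, hx⟩ := hwf.inter_iInter_nonempty (fun a : A => isCompact_singleton.nhdsKer)
    (fun a => isSaturatedSet_nhdsKer _) hdirKer hA fun a => ⟨a, a.2, subset_nhdsKer rfl⟩
  refine ⟨x, isGenericPoint_iff_specializes.2 fun y => ⟨fun hxy => hxy.mem_closed hA hxA, ?_⟩⟩
  exact fun hy => mem_nhdsKer_singleton.1 (mem_iInter.1 hx ⟨y, hy⟩)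

end

section SaturatedTail

variable {X ι : Type*} [TopologicalSpace X] [Preorder ι]

/-- The saturation of the tail `{c m | n ≤ m}` together with the point `x`, which is meant to be a
limit of `c`: adjoining it makes the tails of a sequence compact. -/
def saturatedTail (c : ι → X) (x : X) (n : ι) : Set X :=
  nhdsKer (insert x (c '' Ici n))

theorem antitone_saturatedTail (c : ι → X) (x : X) : Antitone (saturatedTail c x) :=
  fun _ _ hmn => nhdsKer_mono (insert_subset_insert (image_mono (Ici_subset_Ici.2 hmn)))

theorem mem_saturatedTail (c : ι → X) (x : X) (n : ι) : c n ∈ saturatedTail c x n :=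
  subset_nhdsKer (mem_insert_of_mem x (mem_image_of_mem c self_mem_Ici))

theorem isCompact_saturatedTail {c : ℕ → X} {x : X} (hc : Tendsto c atTop (𝓝 x)) (n : ℕ) :
    IsCompact (saturatedTail c x n) := by
  have htail : range (fun k => c (k + n)) = c '' Ici n := by
    ext y
    simp [le_iff_exists_add']
  rw [saturatedTail, ← htail]
  exact ((tendsto_add_atTop_iff_nat n).2 hc).isCompact_insert_range.nhdsKer

theorem iInter_saturatedTail [Nonempty ι] [IsDirectedOrder ι] {c : ι → X} {x : X}
    (hc : Tendsto c atTop (𝓝 x)) : ⋂ n, saturatedTail c x n = nhdsKer {x} := by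
  refine Subset.antisymm (fun e he => mem_nhdsKer_singleton.2 ?_) <|
    subset_iInter fun n => nhdsKer_mono (singleton_subset_iff.2 (mem_insert x _))
  by_contra hex
  have hfreq : ∃ᶠ n in atTop, c n ∈ closure {e} := by
    refine frequently_atTop.2 fun n => ?_
    obtain ⟨y, rfl | ⟨m, hnm, rfl⟩, hey⟩ := mem_nhdsKer_iff_specializes.1 (mem_iInter.1 he n)
    · exact absurd hey hex
    · exact ⟨m, hnm, hey.mem_closure⟩
  exact hex (specializes_iff_mem_closure.2 (isClosed_closure.mem_of_frequently_of_tendsto hfreq hc))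

end SaturatedTail

section

variable {X : Type*} [TopologicalSpace X]

theorem WellFiltered.exists_specializes_of_tendsto (hwf : WellFiltered X) (hcoh : Coherent X)
    {A : Set X} (hA : IsClosed A) {c : ℕ → X} (hcA : ∀ n, c n ∈ A) {a b : X}
    (hca : Tendsto c atTop (𝓝 a)) (hcb : Tendsto c atTop (𝓝 b)) :
    ∃ e ∈ A, e ⤳ a ∧ e ⤳ b := by
  have hsat (x : X) (n : ℕ) : IsSaturatedSet (saturatedTail c x n) := isSaturatedSet_nhdsKer _
  have hanti : Antitone fun n => saturatedTail c a n ∩ saturatedTail c b n :=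
    (antitone_saturatedTail c a).inter (antitone_saturatedTail c b)
  obtain ⟨e, heA, he⟩ := hwf.inter_iInter_nonempty
    (fun n => hcoh _ _ (isCompact_saturatedTail hca n) (hsat a n)
      (isCompact_saturatedTail hcb n) (hsat b n))
    (fun n => (hsat a n).inter (hsat b n)) hanti.directed_ge hA
    fun n => ⟨c n, hcA n, mem_saturatedTail c a n, mem_saturatedTail c b n⟩
  rw [iInter_inter_distrib, iInter_saturatedTail hca, iInter_saturatedTail hcb] at he
  exact ⟨e, heA, mem_nhdsKer_singleton.1 he.1, mem_nhdsKer_singleton.1 he.2⟩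

theorem mk_mem_closure_image_diag_of_isPreirreducible {A : Set X} (hA : IsPreirreducible A)
    {a b : X} (ha : a ∈ closure A) (hb : b ∈ closure A) :
    (a, b) ∈ closure ((fun x => (x, x)) '' A) := by
  refine mem_closure_iff.2 fun W hW hab => ?_
  obtain ⟨U, V, hU, hV, haU, hbV, hUV⟩ := isOpen_prod_iff.1 hW a b hab
  have hAU : (A ∩ U).Nonempty := inter_comm U A ▸ mem_closure_iff.1 ha U hU haU
  have hAV : (A ∩ V).Nonempty := inter_comm V A ▸ mem_closure_iff.1 hb V hV hbV
  obtain ⟨c, hcA, hcUV⟩ := hA U V hU hV hAU hAV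
  exact ⟨(c, c), hUV hcUV, mem_image_of_mem _ hcA⟩

variable [FrechetUrysohnSpace (X × X)]

theorem exists_seq_tendsto_tendsto_of_isPreirreducible {A : Set X} (hA : IsPreirreducible A)
    {a b : X} (ha : a ∈ closure A) (hb : b ∈ closure A) :
    ∃ c : ℕ → X, (∀ n, c n ∈ A) ∧ Tendsto c atTop (𝓝 a) ∧ Tendsto c atTop (𝓝 b) := by
  obtain ⟨u, huA, hu⟩ := mem_closure_iff_seq_limit.1
    (mk_mem_closure_image_diag_of_isPreirreducible hA ha hb)
  choose c hcA hcu using huA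
  obtain rfl : (fun n => (c n, c n)) = u := funext hcu
  exact ⟨c, hcA, hu.fst_nhds, hu.snd_nhds⟩

theorem WellFiltered.directedOn_specializes_of_isPreirreducible (hwf : WellFiltered X)
    (hcoh : Coherent X) {A : Set X} (hirr : IsPreirreducible A) (hA : IsClosed A) :
    DirectedOn (fun a b => b ⤳ a) A := by
  intro a ha b hb
  obtain ⟨c, hcA, hca, hcb⟩ := exists_seq_tendsto_tendsto_of_isPreirreducible hirr
    (subset_closure ha) (subset_closure hb)
  exact hwf.exists_specializes_of_tendsto hcoh hA hcA hca hcb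

end

theorem stmt2_general {X : Type*} [TopologicalSpace X] [FrechetUrysohnSpace (X × X)]
    (hwf : WellFiltered X) (hcoh : Coherent X) : QuasiSober X where
  sober hirr hA := hwf.exists_isGenericPoint_of_directedOn hirr.nonempty hA
    (hwf.directedOn_specializes_of_isPreirreducible hcoh hirr.isPreirreducible hA)

/-- Let P be a poset such that the product space ΣP × ΣP is a Fréchet space.
If ΣP is well-filtered and coherent, then ΣP is sober. -/
theorem stmt2 {P : Type*} [PartialOrder P]
    [TopologicalSpace P] [Topology.IsScott P Set.univ]
    [FrechetUrysohnSpace (P × P)]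
    (hwf : WellFiltered P) (hcoh : Coherent P) :
    T0Space P ∧ QuasiSober P :=
  ⟨inferInstance, stmt2_general hwf hcoh⟩
end

section
/- Let P be a bounded complete dcpo. If the product space ΣP × ΣP is a Fréchet space, then ΣP is sober. -/
/-!
For a closed set `F`, consider the set of pairs having a common upper bound in `F`. Bounded
completeness makes each of its sections Scott closed, because joining a directed set with a fixed
element keeps it directed. A set of pairs with Scott closed sections is sequentially closed: if
`(xₖ, yₖ)` in the set converged to `(x, y)` outside it, then near `y` only finitely many of the
sections over the `xₖ` would pass through any given point, and in a Scott topology the union of a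
point-finite family of closed sets is closed, so that it cannot accumulate at `y`. When the product
is sequential, the set of pairs is therefore closed; if `F` is irreducible, it contains `F × F`
because it contains the diagonal of `F`. So `F` is directed, and its supremum is its generic point.
-/

open Set Filter Topology Topology.IsScott

section ScottSections

variable {α : Type*} [Preorder α] [TopologicalSpace α]

theorem isOpen_diff_iUnion_of_point_finite (D : Set (Set α)) [IsScott α D] {ι : Type*}
    {U : Set α} {C : ι → Set α} (hU : IsOpen U) (hC : ∀ i, IsClosed (C i))
    (hfin : ∀ d ∈ U, {i | d ∈ C i}.Finite) : IsOpen (U \ ⋃ i, C i) := by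
  have hUupper : IsUpperSet U := isUpperSet_of_isOpen (D := D) hU
  have hClower (i : ι) : IsLowerSet (C i) :=
    isUpperSet_compl.1 (isUpperSet_of_isOpen (D := D) (hC i).isOpen_compl)
  have inacc {V : Set α} (hV : IsOpen V) : DirSupInaccOn D V :=
    (isOpen_iff_isUpperSet_and_dirSupInaccOn.1 hV).2
  rw [isOpen_iff_isUpperSet_and_dirSupInaccOn (D := D)]
  refine ⟨hUupper.sdiff_of_isLowerSet (isLowerSet_iUnion hClower), ?_⟩
  intro S hS hne hdir s hs ⟨hsU, hsC⟩
  obtain ⟨d, hdS, hdU⟩ := inacc hU hS hne hdir hs hsU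
  -- Above `d` only the finitely many `C i` through `d` remain to be avoided.
  have hopen : IsOpen (U \ ⋃ i ∈ {i | d ∈ C i}, C i) :=
    hU.sdiff ((hfin d hdU).isClosed_biUnion fun i _ => hC i)
  obtain ⟨e, heS, -, heC⟩ :=
    inacc hopen hS hne hdir hs ⟨hsU, fun h => hsC (iUnion₂_subset_iUnion _ _ h)⟩
  obtain ⟨f, hfS, hdf, hef⟩ := hdir d hdS e heS
  refine ⟨f, hfS, hUupper hdf hdU, fun hfC => ?_⟩
  obtain ⟨i, hfi⟩ := mem_iUnion.1 hfC
  exact heC (mem_biUnion (hClower i hdf hfi) (hClower i hef hfi))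

theorem isSeqClosed_of_isClosed_sections (D : Set (Set α)) [IsScott α D] {X : Type*}
    [TopologicalSpace X] {C : Set (X × α)} (hfst : ∀ y, IsClosed {x | (x, y) ∈ C})
    (hsnd : ∀ x, IsClosed {y | (x, y) ∈ C}) : IsSeqClosed C := by
  rintro u ⟨x, y⟩ hu hlim
  by_contra hxy
  obtain ⟨hx, hy⟩ := (Prod.tendsto_iff _ _).1 hlim
  have hev (d : α) (hd : (x, d) ∉ C) : ∀ᶠ k in atTop, ((u k).1, d) ∉ C :=
    hx.eventually ((hfst d).isOpen_compl.mem_nhds hd)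
  let I : Set ℕ := {k | ((u k).1, y) ∉ C}
  have hopen : IsOpen ({d | (x, d) ∈ C}ᶜ \ ⋃ k : I, {d | ((u k).1, d) ∈ C}) := by
    refine isOpen_diff_iUnion_of_point_finite D (hsnd x).isOpen_compl
      (fun k => hsnd _) fun d hd => ?_
    have hfin : {k | ((u k).1, d) ∈ C}.Finite := by
      simpa only [← Nat.cofinite_eq_atTop, eventually_cofinite, not_not] using hev d hd
    exact Finite.preimage (f := ((↑) : I → ℕ)) Subtype.val_injective.injOn hfin
  have hyopen : y ∈ {d | (x, d) ∈ C}ᶜ \ ⋃ k : I, {d | ((u k).1, d) ∈ C} :=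
    ⟨hxy, fun h => (mem_iUnion.1 h).elim fun k hk => k.2 hk⟩
  obtain ⟨k, ⟨-, hk⟩, hkI⟩ := ((hy.eventually (hopen.mem_nhds hyopen)).and (hev y hxy)).exists
  exact hk (mem_iUnion.2 ⟨⟨k, hkI⟩, hu k⟩)

end ScottSections

/-- The pairs of elements that have a common upper bound in `F`; the set `F` is directed exactly
when it contains `F ×ˢ F`. -/
def boundedPairs {α : Type*} [LE α] (F : Set α) : Set (α × α) :=
  {p | ∃ c ∈ F, p.1 ≤ c ∧ p.2 ≤ c}

theorem mk_mem_boundedPairs_comm {α : Type*} [LE α] {F : Set α} {a b : α} :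
    (a, b) ∈ boundedPairs F ↔ (b, a) ∈ boundedPairs F := by
  simp only [boundedPairs, mem_ofPred_eq, and_comm]

section DirectedComplete

variable {α : Type*} [Preorder α] {F : Set α}

theorem dirSupClosed_setOf_mk_mem_boundedPairs
    (hdcpo : ∀ D : Set α, D.Nonempty → DirectedOn (· ≤ ·) D → ∃ x, IsLUB D x)
    (hpair : ∀ a b : α, BddAbove {a, b} → ∃ x, IsLUB {a, b} x)
    (hlower : IsLowerSet F) (hclosed : DirSupClosed F) (b : α) :
    DirSupClosed {a | (a, b) ∈ boundedPairs F} := by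
  intro D hD hne hdir s hs
  have hjoin : ∀ a ∈ D, ∃ j ∈ F, IsLUB {a, b} j := by
    intro a ha
    obtain ⟨c, hc, hac, hbc⟩ := hD ha
    have hub : c ∈ upperBounds {a, b} := by simp [hac, hbc]
    obtain ⟨j, hj⟩ := hpair a b ⟨c, hub⟩
    exact ⟨j, hlower (hj.2 hub) hc, hj⟩
  choose! j hjF hj using hjoin
  have le_j {a : α} (ha : a ∈ D) : a ≤ j a := (hj a ha).1 (by simp)
  have b_le_j {a : α} (ha : a ∈ D) : b ≤ j a := (hj a ha).1 (by simp)
  have hmono : MonotoneOn j D := fun a ha a' ha' h =>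
    (hj a ha).2 (by simp [h.trans (le_j ha'), b_le_j ha'])
  have hjdir : DirectedOn (· ≤ ·) (j '' D) := by
    refine directedOn_image.2 fun a₁ h₁ a₂ h₂ => ?_
    obtain ⟨a, ha, hle₁, hle₂⟩ := hdir a₁ h₁ a₂ h₂
    exact ⟨a, ha, hmono h₁ ha hle₁, hmono h₂ ha hle₂⟩
  obtain ⟨c, hc⟩ := hdcpo (j '' D) (hne.image j) hjdir
  have j_le_c {a : α} (ha : a ∈ D) : j a ≤ c := hc.1 (mem_image_of_mem j ha)
  obtain ⟨a₀, ha₀⟩ := hne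
  exact ⟨c, hclosed (image_subset_iff.2 hjF) ⟨j a₀, mem_image_of_mem j ha₀⟩ hjdir hc,
    hs.2 fun a ha => (le_j ha).trans (j_le_c ha), (b_le_j ha₀).trans (j_le_c ha₀)⟩

variable [TopologicalSpace α] [IsScott α univ]

theorem isClosed_setOf_mk_mem_boundedPairs
    (hdcpo : ∀ D : Set α, D.Nonempty → DirectedOn (· ≤ ·) D → ∃ x, IsLUB D x)
    (hpair : ∀ a b : α, BddAbove {a, b} → ∃ x, IsLUB {a, b} x) (hF : IsClosed F) (b : α) :
    IsClosed {a | (a, b) ∈ boundedPairs F} := by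
  rw [isClosed_iff_isLowerSet_and_dirSupClosed] at hF ⊢
  exact ⟨fun a a' h ⟨c, hc, hac, hbc⟩ => ⟨c, hc, h.trans hac, hbc⟩,
    dirSupClosed_setOf_mk_mem_boundedPairs hdcpo hpair hF.1 hF.2 b⟩

theorem isSeqClosed_boundedPairs
    (hdcpo : ∀ D : Set α, D.Nonempty → DirectedOn (· ≤ ·) D → ∃ x, IsLUB D x)
    (hpair : ∀ a b : α, BddAbove {a, b} → ∃ x, IsLUB {a, b} x) (hF : IsClosed F) :
    IsSeqClosed (boundedPairs F) := by
  have hsec := isClosed_setOf_mk_mem_boundedPairs hdcpo hpair hF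
  refine isSeqClosed_of_isClosed_sections univ hsec fun a => ?_
  simpa only [mk_mem_boundedPairs_comm] using hsec a

theorem exists_isGenericPoint_of_directedOn
    (hdcpo : ∀ D : Set α, D.Nonempty → DirectedOn (· ≤ ·) D → ∃ x, IsLUB D x)
    (hF : IsClosed F) (hne : F.Nonempty) (hdir : DirectedOn (· ≤ ·) F) :
    ∃ x, IsGenericPoint x F := by
  obtain ⟨s, hs⟩ := hdcpo F hne hdir
  have hsF : s ∈ F := dirSupClosed_of_isClosed hF subset_rfl hne hdir hs
  refine ⟨s, ?_⟩
  rw [isGenericPoint_def, IsScott.closure_singleton]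
  exact ((isLowerSet_of_isClosed hF).Iic_subset hsF).antisymm hs.1

end DirectedComplete

theorem prod_self_subset_of_isPreirreducible {X : Type*} [TopologicalSpace X] {F : Set X}
    {C : Set (X × X)} (hF : IsPreirreducible F) (hC : IsClosed C) (hdiag : ∀ z ∈ F, (z, z) ∈ C) :
    F ×ˢ F ⊆ C := by
  rintro ⟨x, y⟩ ⟨hx, hy⟩
  by_contra hxy
  obtain ⟨U, V, hU, hV, hxU, hyV, hUV⟩ := isOpen_prod_iff.1 hC.isOpen_compl x y hxy
  obtain ⟨z, hzF, hzU, hzV⟩ := hF U V hU hV ⟨x, hx, hxU⟩ ⟨y, hy, hyV⟩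
  exact hUV (mk_mem_prod hzU hzV) (hdiag z hzF)

theorem stmt3_general {α : Type*} [Preorder α]
    (hdcpo : ∀ D : Set α, D.Nonempty → DirectedOn (· ≤ ·) D → ∃ x, IsLUB D x)
    (hpair : ∀ a b : α, BddAbove {a, b} → ∃ x, IsLUB {a, b} x)
    [TopologicalSpace α] [IsScott α univ] [SequentialSpace (α × α)] :
    QuasiSober α := by
  refine ⟨fun {F} hirr hF => ?_⟩
  have hclosed : IsClosed (boundedPairs F) := (isSeqClosed_boundedPairs hdcpo hpair hF).isClosed
  have hsub : F ×ˢ F ⊆ boundedPairs F :=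
    prod_self_subset_of_isPreirreducible hirr.isPreirreducible hclosed
      fun z hz => ⟨z, hz, le_rfl, le_rfl⟩
  have hdir : DirectedOn (· ≤ ·) F := fun x hx y hy => hsub (mk_mem_prod hx hy)
  exact exists_isGenericPoint_of_directedOn hdcpo hF hirr.nonempty hdir

/-- Let P be a bounded complete dcpo. If the product space ΣP × ΣP is a
Fréchet space, then ΣP is sober. -/
theorem stmt3 {P : Type*} [PartialOrder P]
    (hdcpo : ∀ D : Set P, D.Nonempty → DirectedOn (· ≤ ·) D → ∃ x, IsLUB D x)
    (hbc : ∀ S : Set P, (∃ b, b ∈ upperBounds S) → ∃ x, IsLUB S x)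
    [TopologicalSpace P] [Topology.IsScott P Set.univ]
    [FrechetUrysohnSpace (P × P)] :
    T0Space P ∧ QuasiSober P :=
  ⟨inferInstance, stmt3_general hdcpo fun a b => hbc {a, b}⟩
end

section
/- Let X be a well-filtered coherent T0 space. If X is first-countable, then X is sober. -/
/-
In a first-countable space, the points of an irreducible set `C` can be approximated by a sequence
in `C` that also converges to each of its own terms. Every tail of such a sequence is compact. If
the space is well-filtered and `C` is closed, then some point of `C` lies in the saturation of all
these tails, hence above every limit of the sequence. So `C` is directed in the specialization
order, and a second use of well-filteredness, for the principal upper sets of the points of `C`,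
yields a point of `C` above all the others: this is a generic point.
-/

open Filter Set Topology

section

variable {X : Type*} [TopologicalSpace X]

theorem neBot_iInf_nhds_inf_principal_of_isIrreducible {C : Set X} (hC : IsIrreducible C) :
    NeBot ((⨅ x ∈ C, 𝓝 x) ⊓ 𝓟 C) := by
  rw [inf_principal_neBot_iff, iInf_subtype']
  intro U hU
  have hmeet : (C ∩ interior U).Nonempty := by
    refine iInf_sets_induct (p := fun V => (C ∩ interior V).Nonempty) hU ?_ ?_
    · simpa only [interior_univ, inter_univ] using hC.nonempty
    · intro x V W hV hW
      rw [interior_inter]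
      exact hC.isPreirreducible _ _ isOpen_interior isOpen_interior
        ⟨x, x.2, mem_interior_iff_mem_nhds.2 hV⟩ hW
  exact hmeet.mono fun x hx => ⟨interior_subset hx.2, hx.1⟩

theorem exists_seq_tendsto_and_forall_tendsto_self [FirstCountableTopology X] {F l : Filter X}
    [NeBot F] [IsCountablyGenerated l] (hFl : F ≤ l) {C : Set X} (hCF : C ∈ F)
    (hF : ∀ x ∈ C, F ≤ 𝓝 x) :
    ∃ a : ℕ → X, (∀ n, a n ∈ C) ∧ Tendsto a atTop l ∧ ∀ n, Tendsto a atTop (𝓝 (a n)) := by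
  choose U hU using fun x : X => (𝓝 x).exists_antitone_basis
  obtain ⟨V, hV⟩ := l.exists_antitone_basis
  -- A pair `(j, x)` is a candidate term `x` that has to lie in the `j`-th basic sets of `l` and of
  -- all the earlier terms.
  have hnext (s : Finset (ℕ × X)) (hs : ∀ p ∈ s, p.2 ∈ C ∧ p.2 ∈ V p.1) :
      ∃ q : ℕ × X, (q.2 ∈ C ∧ q.2 ∈ V q.1) ∧ ∀ p ∈ s, p.1 < q.1 ∧ q.2 ∈ U p.2 q.1 := by
    obtain ⟨j, hj⟩ : ∃ j, ∀ p ∈ s, p.1 < j :=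
      ⟨s.sup Prod.fst + 1, fun p hp => Nat.lt_succ_of_le (Finset.le_sup (f := Prod.fst) hp)⟩
    have hsF : ∀ᶠ x in F, ∀ p ∈ s, x ∈ U p.2 j :=
      (eventually_all_finset s).2 fun p hp => hF p.2 (hs p hp).1 ((hU p.2).mem j)
    obtain ⟨x, ⟨hxC, hxV⟩, hxU⟩ :=
      ((eventually_mem_set.2 hCF).and (hFl (hV.mem j)) |>.and hsF).exists
    exact ⟨(j, x), ⟨hxC, hxV⟩, fun p hp => ⟨hj p hp, hxU p hp⟩⟩
  obtain ⟨f, hf, hfU⟩ := exists_seq_of_forall_finset_exists _ _ hnext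
  have hprecision : Tendsto (fun n => (f n).1) atTop atTop :=
    StrictMono.tendsto_atTop fun m n hmn => (hfU m n hmn).1
  refine ⟨fun n => (f n).2, fun n => (hf n).1, ?_, fun m => ?_⟩
  · exact (hV.tendsto_smallSets.comp hprecision).of_smallSets (.of_forall fun n => (hf n).2)
  · exact ((hU _).tendsto_smallSets.comp hprecision).of_smallSets
      ((eventually_gt_atTop m).mono fun n hmn => (hfU m n hmn).2)

theorem isCompact_range_of_tendsto_of_mem {a : ℕ → X} {x : X} (ha : Tendsto a atTop (𝓝 x))
    (hx : x ∈ range a) : IsCompact (range a) := by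
  simpa only [insert_eq_of_mem hx] using ha.isCompact_insert_range

theorem specializes_of_forall_mem_nhdsKer_tail {a : ℕ → X} {x z : X}
    (ha : Tendsto a atTop (𝓝 x)) (hz : ∀ n, z ∈ nhdsKer (range fun k => a (k + n))) : z ⤳ x := by
  rw [specializes_iff_forall_open]
  intro U hU hxU
  obtain ⟨n, hn⟩ := eventually_atTop.1 (ha.eventually (hU.mem_nhds hxU))
  exact hU.nhdsKer_subset.2 (range_subset_iff.2 fun k => hn _ (Nat.le_add_left n k)) (hz n)

namespace WellFiltered

theorem inter_iInter_nhdsKer_nonempty (hX : WellFiltered X) {ι : Type*} [Nonempty ι]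
    {K : ι → Set X} (hK : ∀ i, IsCompact (K i))
    (hdir : Directed (fun A B => B ⊆ A) fun i => nhdsKer (K i)) {C : Set X} (hC : IsClosed C)
    (hCK : ∀ i, (C ∩ K i).Nonempty) : (C ∩ ⋂ i, nhdsKer (K i)).Nonempty := by
  by_contra hempty
  have hsub : ⋂₀ range (fun i => nhdsKer (K i)) ⊆ Cᶜ := by
    rw [sInter_range]
    exact fun z hzK hzC => hempty ⟨z, hzC, hzK⟩
  obtain ⟨_, ⟨i, rfl⟩, hi⟩ := hX _ (range_nonempty _)
    (forall_mem_range.2 fun i => ⟨(hK i).nhdsKer, isSaturatedSet_nhdsKer _⟩)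
    hdir.directedOn_range Cᶜ hC.isOpen_compl hsub
  obtain ⟨z, hzC, hzK⟩ := hCK i
  exact hi (subset_nhdsKer hzK) hzC

theorem exists_forall_specializes_of_countable [FirstCountableTopology X] (hX : WellFiltered X)
    {C : Set X} (hirr : IsIrreducible C) (hC : IsClosed C) {S : Set X} (hS : S.Countable)
    (hSC : S ⊆ C) : ∃ z ∈ C, ∀ x ∈ S, z ⤳ x := by
  have hne := neBot_iInf_nhds_inf_principal_of_isIrreducible hirr
  have hcount : IsCountablyGenerated (⨅ x ∈ S, 𝓝 x) := by
    have := hS.to_subtype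
    rw [iInf_subtype']
    infer_instance
  obtain ⟨a, haC, haS, haa⟩ := exists_seq_tendsto_and_forall_tendsto_self
    (inf_le_left.trans (biInf_mono hSC) : (⨅ x ∈ C, 𝓝 x) ⊓ 𝓟 C ≤ ⨅ x ∈ S, 𝓝 x)
    (mem_inf_of_right (mem_principal_self C))
    fun x hx => inf_le_left.trans (iInf₂_le x hx)
  have htail_compact (n : ℕ) : IsCompact (range fun k => a (k + n)) :=
    isCompact_range_of_tendsto_of_mem ((tendsto_add_atTop_iff_nat n).2 (haa n))
      ⟨0, congrArg a (zero_add n)⟩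
  have htail_anti : Antitone fun n => nhdsKer (range fun k => a (k + n)) := fun m n hmn =>
    nhdsKer_mono <| range_subset_iff.2 fun k => ⟨k + (n - m), congrArg a (by lia)⟩
  obtain ⟨z, hzC, hz⟩ := hX.inter_iInter_nhdsKer_nonempty htail_compact htail_anti.directed_ge hC
    fun n => ⟨a (0 + n), haC _, mem_range_self 0⟩
  exact ⟨z, hzC, fun x hx => specializes_of_forall_mem_nhdsKer_tail
    (haS.mono_right (iInf₂_le x hx)) (mem_iInter.1 hz)⟩

theorem exists_isGenericPoint_of_directed (hX : WellFiltered X) {C : Set X} (hne : C.Nonempty)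
    (hC : IsClosed C) (hdir : DirectedOn (fun x y => y ⤳ x) C) : ∃ z, IsGenericPoint z C := by
  have := hne.to_subtype
  have hdir_nhdsKer : Directed (fun A B => B ⊆ A) fun x : C => nhdsKer {(x : X)} :=
    Directed.mono_comp (g := fun x : X => nhdsKer {x}) _
      (fun _ _ => specializes_iff_nhdsKer_subset.1) hdir.directed_val
  obtain ⟨z, hzC, hz⟩ := hX.inter_iInter_nhdsKer_nonempty (fun _ => isCompact_singleton)
    hdir_nhdsKer hC fun x => ⟨x, x.2, mem_singleton _⟩
  refine ⟨z, (closure_minimal (singleton_subset_iff.2 hzC) hC).antisymm fun x hx => ?_⟩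
  exact (mem_nhdsKer_singleton.1 (mem_iInter.1 hz ⟨x, hx⟩)).mem_closure

end WellFiltered

theorem stmt6_general [FirstCountableTopology X] (hX : WellFiltered X) : QuasiSober X where
  sober {C} hirr hC := hX.exists_isGenericPoint_of_directed hirr.nonempty hC fun x hx y hy => by
    obtain ⟨z, hzC, hz⟩ := hX.exists_forall_specializes_of_countable hirr hC
      (to_countable {x, y}) (pair_subset hx hy)
    exact ⟨z, hzC, hz x (mem_insert x {y}), hz y (mem_insert_of_mem x rfl)⟩

end

/-- Let X be a well-filtered coherent T0 space. If X is first-countable, then X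
is sober. -/
theorem stmt6 {X : Type*} [TopologicalSpace X] [T0Space X]
    (hwf : WellFiltered X) (hcoh : Coherent X)
    [FirstCountableTopology X] :
    QuasiSober X := by
  exact stmt6_general hwf
end

section
/- Let X and Y be ω type P-spaces. Then the Scott topology on the product lattice 𝒪(X) × 𝒪(Y) coincides with the product topology of Σ𝒪(X) and Σ𝒪(Y). -/
/-- A topological space is an ω type space if its topology is generated by a subbase
consisting of countable sets. -/
def OmegaTypeSpace (X : Type*) [t : TopologicalSpace X] : Prop :=
  ∃ S : Set (Set X), (∀ s ∈ S, s.Countable) ∧ t = TopologicalSpace.generateFrom S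

/-- A topological space is a P-space if every countable intersection of open sets is open. -/
def PSpace (X : Type*) [TopologicalSpace X] : Prop :=
  ∀ S : Set (Set X), S.Countable → (∀ U ∈ S, IsOpen U) → IsOpen (⋂₀ S)

/-!
If every point `a` of a Scott-open set `U ⊆ P` has a neighbourhood of the form `Ici k` with `k ∈ U`
(for complete lattices `P`, this says that `P` is continuous), then the Scott topology on `P × Q` is
the product topology for every preorder `Q`: given a Scott-open `W ∋ (a, b)`, choose such a `k` for
the slice `U = {x | (x, b) ∈ W}`; then `Ici k × {y | (k, y) ∈ W}` is a neighbourhood of `(a, b)`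
inside `W`. The lattice `𝒪(X)` has this property when `X` is locally compact, because an open set is
the directed union of the interiors of its compact subsets and `{U | K ⊆ U}` is Scott open for
compact `K`.

An ω type P-space is locally compact, and even Alexandrov-discrete: inside a countable open set `s`,
the least neighbourhood of a point is an intersection of countably many open sets, one for each
point of `s` to be excluded, while a point lying in no countable subbasic set has no neighbourhood
except `X`.
-/

open Set TopologicalSpace Topology

section Scott

variable {P Q : Type*} [Preorder P] [Preorder Q]

theorem isOpen_scott_iff {U : Set P} :
    IsOpen[scott P univ] U ↔ IsUpperSet U ∧ DirSupInacc U := by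
  let : TopologicalSpace P := scott P univ
  have : IsScott P univ := ⟨rfl⟩
  rw [IsScott.isOpen_iff_isUpperSet_and_dirSupInaccOn (D := univ), dirSupInaccOn_univ]

theorem continuous_scott_of_scottContinuous {f : P → Q} (hf : ScottContinuous f) :
    Continuous[scott P univ, scott Q univ] f := by
  let : TopologicalSpace P := scott P univ
  let : TopologicalSpace Q := scott Q univ
  have : IsScott P univ := ⟨rfl⟩
  have : IsScott Q univ := ⟨rfl⟩
  exact (IsScott.scottContinuousOn_iff_continuous fun _ _ _ => mem_univ _).1
    (scottContinuousOn_univ.2 hf)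

theorem scott_prod_le :
    scott (P × Q) univ ≤ @instTopologicalSpaceProd P Q (scott P univ) (scott Q univ) :=
  le_inf (continuous_scott_of_scottContinuous ScottContinuous.fst).le_induced
    (continuous_scott_of_scottContinuous ScottContinuous.snd).le_induced

theorem scott_prod_eq_of_exists_Ici_mem_nhds
    (hP : ∀ U : Set P, IsOpen[scott P univ] U →
      ∀ a ∈ U, ∃ k ∈ U, Ici k ∈ @nhds P (scott P univ) a) :
    scott (P × Q) univ = @instTopologicalSpaceProd P Q (scott P univ) (scott Q univ) := by
  refine le_antisymm scott_prod_le fun W hW => ?_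
  have isOpen_left_slice (b : Q) : IsOpen[scott P univ] {x | (x, b) ∈ W} :=
    continuous_def.1
      (continuous_scott_of_scottContinuous (ScottContinuous.id.prodMk (.const b))) W hW
  have isOpen_right_slice (a : P) : IsOpen[scott Q univ] {y | (a, y) ∈ W} :=
    continuous_def.1
      (continuous_scott_of_scottContinuous ((ScottContinuous.const a).prodMk .id)) W hW
  let : TopologicalSpace P := scott P univ
  let : TopologicalSpace Q := scott Q univ
  refine isOpen_iff_mem_nhds.2 fun ⟨a, b⟩ hab => ?_
  obtain ⟨k, hkb, hka⟩ := hP _ (isOpen_left_slice b) a hab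
  filter_upwards [prod_mem_nhds hka ((isOpen_right_slice k).mem_nhds hkb)] with ⟨x, y⟩ ⟨hkx, hky⟩
  exact (isOpen_scott_iff.1 hW).1 (show (k, y) ≤ (x, y) from ⟨hkx, le_rfl⟩) hky

end Scott

section Opens

variable {X : Type*} [TopologicalSpace X]

theorem isOpen_scott_setOf_subset {K : Set X} (hK : IsCompact K) :
    IsOpen[scott (Opens X) univ] {U : Opens X | K ⊆ U} := by
  refine isOpen_scott_iff.2 ⟨fun U V hUV hKU => Subset.trans hKU hUV, fun D hne hdir U hU hKU => ?_⟩
  have : Nonempty D := hne.to_subtype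
  have hcover : K ⊆ ⋃ V : D, (V : Set X) := by
    rwa [← hU.sSup_eq, mem_ofPred_eq, Opens.coe_sSup, biUnion_eq_iUnion] at hKU
  obtain ⟨V, hKV⟩ := hK.elim_directed_cover _ (fun V : D => V.1.isOpen) hcover hdir.directed_val
  exact ⟨V, V.2, hKV⟩

theorem exists_isCompact_interior_mem [LocallyCompactSpace X] {𝒰 : Set (Opens X)}
    (h𝒰 : IsOpen[scott (Opens X) univ] 𝒰) {U : Opens X} (hU : U ∈ 𝒰) :
    ∃ K : Set X, IsCompact K ∧ K ⊆ U ∧ Opens.interior K ∈ 𝒰 := by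
  let 𝒦 : Set (Set X) := {K | IsCompact K ∧ K ⊆ U}
  have hne : 𝒦.Nonempty := ⟨∅, isCompact_empty, empty_subset _⟩
  have hdir : DirectedOn (· ≤ ·) (Opens.interior '' 𝒦) := by
    rintro _ ⟨K, hK, rfl⟩ _ ⟨L, hL, rfl⟩
    exact ⟨_, mem_image_of_mem _ ⟨hK.1.union hL.1, union_subset hK.2 hL.2⟩,
      interior_mono subset_union_left, interior_mono subset_union_right⟩
  have hlub : IsLUB (Opens.interior '' 𝒦) U := by
    refine ⟨?_, fun V hV x hx => ?_⟩
    · rintro _ ⟨K, hK, rfl⟩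
      exact interior_subset.trans hK.2
    · obtain ⟨K, hK, hxK, hKU⟩ := exists_compact_subset U.isOpen hx
      exact hV (mem_image_of_mem _ ⟨hK, hKU⟩) hxK
  obtain ⟨_, ⟨K, hK, rfl⟩, hK𝒰⟩ := (isOpen_scott_iff.1 h𝒰).2 (hne.image _) hdir hlub hU
  exact ⟨K, hK.1, hK.2, hK𝒰⟩

theorem PSpace.isOpen_nhdsKer (hX : PSpace X) {s t : Set X} (hs : IsOpen s) (hsc : s.Countable)
    (hts : t ⊆ s) : IsOpen (nhdsKer t) := by
  have hsep : ∀ y ∈ s \ nhdsKer t, ∃ U, IsOpen U ∧ t ⊆ U ∧ y ∉ U := fun y hy => by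
    simpa only [mem_nhdsKer, not_forall, exists_prop] using hy.2
  choose! U hU htU hyU using hsep
  have heq : nhdsKer t = ⋂₀ insert s (U '' (s \ nhdsKer t)) := by
    refine Subset.antisymm (subset_sInter ?_) fun y hy => ?_
    · rintro _ (rfl | ⟨y, hy, rfl⟩)
      · exact nhdsKer_minimal hts hs
      · exact nhdsKer_minimal (htU y hy) (hU y hy)
    · by_contra hyt
      have hys : y ∈ s \ nhdsKer t := ⟨hy s (mem_insert _ _), hyt⟩
      exact hyU y hys (hy _ (mem_insert_of_mem _ (mem_image_of_mem U hys)))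
  rw [heq]
  refine hX _ (((hsc.mono sdiff_subset).image U).insert s) ?_
  rintro _ (rfl | ⟨y, hy, rfl⟩)
  · exact hs
  · exact hU y hy

theorem OmegaTypeSpace.exists_countable_isOpen_or_nhds_eq_top (hX : OmegaTypeSpace X) (x : X) :
    (∃ s : Set X, s.Countable ∧ IsOpen s ∧ x ∈ s) ∨ 𝓝 x = ⊤ := by
  obtain ⟨S, hS, rfl⟩ := hX
  by_cases hx : ∃ s ∈ S, x ∈ s
  · obtain ⟨s, hsS, hxs⟩ := hx
    exact .inl ⟨s, hS s hsS, isOpen_generateFrom_of_mem hsS, hxs⟩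
  · right
    rw [nhds_generateFrom]
    exact iInf₂_eq_top.2 fun s hs => absurd ⟨s, hs.2, hs.1⟩ hx

theorem OmegaTypeSpace.alexandrovDiscrete (hX : OmegaTypeSpace X) (hP : PSpace X) :
    AlexandrovDiscrete X := by
  have isOpen_nhdsKer_singleton (x : X) : IsOpen (nhdsKer {x}) := by
    obtain ⟨s, hsc, hs, hxs⟩ | hx := hX.exists_countable_isOpen_or_nhds_eq_top x
    · exact hP.isOpen_nhdsKer hs hsc (singleton_subset_iff.2 hxs)
    · rw [nhdsKer_singleton_eq_ker_nhds, hx, Filter.ker_top]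
      exact isOpen_univ
  refine ⟨fun S hS => isOpen_iff_forall_mem_open.2 fun x hx =>
    ⟨nhdsKer {x}, subset_sInter fun U hU => ?_, isOpen_nhdsKer_singleton x, subset_nhdsKer rfl⟩⟩
  exact nhdsKer_minimal (singleton_subset_iff.2 (hx U hU)) (hS U hU)

end Opens

theorem stmt10_general {X : Type*} [TopologicalSpace X] [LocallyCompactSpace X]
    {P : Type*} [Preorder P] :
    scott (Opens X × P) univ =
      @instTopologicalSpaceProd (Opens X) P (scott (Opens X) univ) (scott P univ) := by
  refine scott_prod_eq_of_exists_Ici_mem_nhds fun 𝒰 h𝒰 U hU => ?_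
  obtain ⟨K, hK, hKU, hK𝒰⟩ := exists_isCompact_interior_mem h𝒰 hU
  let : TopologicalSpace (Opens X) := scott (Opens X) univ
  refine ⟨Opens.interior K, hK𝒰, ?_⟩
  filter_upwards [(isOpen_scott_setOf_subset hK).mem_nhds hKU] with V hKV
  exact interior_subset.trans hKV

/-- Let X and Y be ω type P-spaces. Then the Scott topology on the product
lattice 𝒪(X) × 𝒪(Y) coincides with the product topology of Σ𝒪(X) and Σ𝒪(Y). -/
theorem stmt10 {X Y : Type*} [TopologicalSpace X] [TopologicalSpace Y]
    (hX1 : OmegaTypeSpace X) (hX2 : PSpace X)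
    (hY1 : OmegaTypeSpace Y) (hY2 : PSpace Y) :
    Topology.scott (TopologicalSpace.Opens X × TopologicalSpace.Opens Y) Set.univ =
      @instTopologicalSpaceProd (TopologicalSpace.Opens X) (TopologicalSpace.Opens Y)
        (Topology.scott (TopologicalSpace.Opens X) Set.univ)
        (Topology.scott (TopologicalSpace.Opens Y) Set.univ) := by
  have := hX1.alexandrovDiscrete hX2
  exact stmt10_general
end

section
/- Let X be a countable P-space. Then the lattice 𝒪(X) of open subsets of X, equipped with the Scott topology, is sober. -/
/-- A poset is Scott sober if, equipped with its Scott topology, it is a sober space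
(T0 and every irreducible closed set is the closure of a point). -/
def ScottSober (L : Type*) [Preorder L] : Prop :=
  @T0Space L (Topology.scott L Set.univ) ∧ @QuasiSober L (Topology.scott L Set.univ)

/-
Call `V` compactly contained in `U`, written `V ⋐ U`, if some compact set lies between them. The
open sets that compactly contain a given `V` form a Scott open set. If `F` is an irreducible Scott
closed family of open sets, then irreducibility makes `{V | ∃ U ∈ F, V ⋐ U}` directed, as two Scott
open sets that meet `F` meet it in a common point; local compactness makes its supremum that of `F`.
Hence `F` contains its supremum, which is its generic point. A countable P-space is locally compact,
since each of its points has a smallest neighbourhood: the intersection of all open neighbourhoods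
is already that of countably many, one omitting each point outside it.
-/

open Set TopologicalSpace Topology

theorem exists_countable_subset_sInter_eq {α : Type*} {S : Set (Set α)}
    (hS : (⋂₀ S)ᶜ.Countable) : ∃ T ⊆ S, T.Countable ∧ ⋂₀ T = ⋂₀ S := by
  have exists_notMem (y : ↥(⋂₀ S)ᶜ) : ∃ s ∈ S, y.1 ∉ s := by
    simpa only [mem_compl_iff, mem_sInter, not_forall, exists_prop] using y.2
  choose s hsS hs using exists_notMem
  have := hS.to_subtype
  have range_subset : range s ⊆ S := range_subset_iff.2 hsS
  refine ⟨range s, range_subset, countable_range s,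
    Subset.antisymm (fun x hx ↦ ?_) (sInter_subset_sInter range_subset)⟩
  by_contra hxS
  exact hs ⟨x, hxS⟩ (hx _ (mem_range_self _))

theorem PSpace.alexandrovDiscrete {X : Type*} [TopologicalSpace X] [Countable X] (h : PSpace X) :
    AlexandrovDiscrete X where
  isOpen_sInter S hS := by
    obtain ⟨T, hTS, hT, hTS_eq⟩ := exists_countable_subset_sInter_eq (to_countable (⋂₀ S)ᶜ)
    exact hTS_eq ▸ h T hT fun U hU ↦ hS U (hTS hU)

theorem isGenericPoint_of_isGreatest_s12 {α : Type*} [Preorder α] [TopologicalSpace α]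
    [IsScott α univ] {F : Set α} {a : α} (hF : IsClosed F) (ha : IsGreatest F a) :
    IsGenericPoint a F := by
  rw [IsGenericPoint, IsScott.closure_singleton]
  exact Subset.antisymm ((IsScott.isLowerSet_of_isClosed hF).Iic_subset ha.1) ha.2

section LocallyCompact

variable {X : Type*} [TopologicalSpace X]

/-- The relation `V ⋐ U` between open sets: some compact set contains `V` and is contained in `U`.
The compact set need not be the closure of `V`, as `X` is not assumed to be Hausdorff. For locally
compact `X` this is the way-below relation of the lattice of open sets. -/
def CompactlyContained (V U : Opens X) : Prop :=
  ∃ K : Set X, IsCompact K ∧ (V : Set X) ⊆ K ∧ K ⊆ U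

namespace CompactlyContained

theorem le {V U : Opens X} : CompactlyContained V U → V ≤ U :=
  fun ⟨_, _, hVK, hKU⟩ ↦ hVK.trans hKU

theorem bot_left (U : Opens X) : CompactlyContained ⊥ U :=
  ⟨∅, isCompact_empty, Subset.rfl, empty_subset _⟩

theorem sup_left {V W U : Opens X} :
    CompactlyContained V U → CompactlyContained W U → CompactlyContained (V ⊔ W) U :=
  fun ⟨K, hK, hVK, hKU⟩ ⟨L, hL, hWL, hLU⟩ ↦
    ⟨K ∪ L, hK.union hL, union_subset_union hVK hWL, union_subset hKU hLU⟩

theorem exists_mem [LocallyCompactSpace X] {U : Opens X} {x : X} (hx : x ∈ U) :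
    ∃ V, CompactlyContained V U ∧ x ∈ V := by
  obtain ⟨K, hK, hxK, hKU⟩ := exists_compact_subset U.isOpen hx
  exact ⟨Opens.interior K, ⟨K, hK, interior_subset, hKU⟩, hxK⟩

end CompactlyContained

theorem isLUB_setOf_compactlyContained [LocallyCompactSpace X] (F : Set (Opens X)) :
    IsLUB {V | ∃ U ∈ F, CompactlyContained V U} (sSup F) := by
  refine ⟨fun V ⟨U, hU, hVU⟩ ↦ hVU.le.trans (le_sSup hU), fun W hW ↦ sSup_le fun U hU x hx ↦ ?_⟩
  obtain ⟨V, hVU, hxV⟩ := CompactlyContained.exists_mem hx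
  exact hW ⟨U, hU, hVU⟩ hxV

section Scott

variable [TopologicalSpace (Opens X)] [IsScott (Opens X) univ]

theorem isOpen_setOf_subset_of_isCompact {K : Set X} (hK : IsCompact K) :
    IsOpen {U : Opens X | K ⊆ U} := by
  refine (IsScott.isOpen_iff_isUpperSet_and_dirSupInaccOn (D := univ)).2
    ⟨fun U V hUV (hKU : K ⊆ U) ↦ hKU.trans hUV, fun D _ hD hD_dir U hU hKU ↦ ?_⟩
  have := hD.to_subtype
  have covers : K ⊆ ⋃ V : D, (V : Set X) := by
    rwa [← hU.sSup_eq, mem_ofPred_eq, Opens.coe_sSup, biUnion_eq_iUnion] at hKU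
  obtain ⟨V, hKV⟩ := hK.elim_directed_cover _ (fun V : D ↦ V.1.isOpen) covers hD_dir.directed_val
  exact ⟨V, V.2, hKV⟩

theorem isOpen_setOf_compactlyContained (V : Opens X) : IsOpen {U | CompactlyContained V U} := by
  have eq_iUnion : {U | CompactlyContained V U} =
      ⋃ K ∈ {K : Set X | IsCompact K ∧ (V : Set X) ⊆ K}, {U : Opens X | K ⊆ U} := by
    ext U
    simp only [CompactlyContained, mem_ofPred_eq, mem_iUnion, exists_prop, and_assoc]
  rw [eq_iUnion]
  exact isOpen_biUnion fun K hK ↦ isOpen_setOf_subset_of_isCompact hK.1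

theorem directedOn_setOf_compactlyContained {F : Set (Opens X)} (hF : IsPreirreducible F) :
    DirectedOn (· ≤ ·) {V | ∃ U ∈ F, CompactlyContained V U} := by
  rintro V ⟨U, hU, hVU⟩ W ⟨U', hU', hWU'⟩
  obtain ⟨T, hT, hVT, hWT⟩ := hF _ _ (isOpen_setOf_compactlyContained V)
    (isOpen_setOf_compactlyContained W) ⟨U, hU, hVU⟩ ⟨U', hU', hWU'⟩
  exact ⟨V ⊔ W, ⟨T, hT, hVT.sup_left hWT⟩, le_sup_left, le_sup_right⟩

theorem sSup_mem_of_isIrreducible_of_isClosed [LocallyCompactSpace X] {F : Set (Opens X)}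
    (hF : IsIrreducible F) (hF_closed : IsClosed F) : sSup F ∈ F := by
  have subset_family : {V | ∃ U ∈ F, CompactlyContained V U} ⊆ F :=
    fun V ⟨U, hU, hVU⟩ ↦ IsScott.isLowerSet_of_isClosed hF_closed hVU.le hU
  obtain ⟨U, hU⟩ := hF.nonempty
  exact IsScott.dirSupClosed_of_isClosed hF_closed subset_family
    ⟨⊥, U, hU, CompactlyContained.bot_left U⟩
    (directedOn_setOf_compactlyContained hF.isPreirreducible) (isLUB_setOf_compactlyContained F)

theorem quasiSober_opens [LocallyCompactSpace X] : QuasiSober (Opens X) where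
  sober {F} hF hF_closed :=
    ⟨sSup F, isGenericPoint_of_isGreatest_s12 hF_closed
      ⟨sSup_mem_of_isIrreducible_of_isClosed hF hF_closed, fun _ ↦ le_sSup⟩⟩

end Scott

end LocallyCompact

theorem stmt12_general {X : Type*} [TopologicalSpace X] [LocallyCompactSpace X] :
    ScottSober (Opens X) := by
  let : TopologicalSpace (Opens X) := scott _ univ
  have : IsScott (Opens X) univ := ⟨rfl⟩
  exact ⟨inferInstance, quasiSober_opens⟩

/-- Let X be a countable P-space. Then the lattice 𝒪(X) of open subsets of X,
equipped with the Scott topology, is sober. -/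
theorem stmt12 {X : Type*} [TopologicalSpace X] [Countable X] (h : PSpace X) :
    ScottSober (TopologicalSpace.Opens X) := by
  have := h.alexandrovDiscrete
  exact stmt12_general
end

section
/- Let P be a poset such that ΣP is an ω type space. Then the complete lattice σ(P) of Scott-open subsets of P, equipped with the Scott topology, is sober. -/
/-!
Irreducibility of a Scott-closed family `F` of open sets is only used through the opens
`{U | x ∈ U}`: every finite subset of `⋃ F` lies in a single member of `F`. A countable open
`W ⊆ ⋃ F` is the increasing union of finite sets, so choosing members of `F` around them yields a
sequence `A` in `F` that contains each point of `W` eventually. Over a Scott space the sets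
`W ∩ ⋂ n ≥ m, A n` are again open; they increase to `W`, so `A` converges to `W` in the Scott
topology and `W ∈ F`. Finally `⋃ F` is the directed union of its countable open subsets, unless
some point of `⋃ F` has no countable neighbourhood; but such a point has no neighbourhood besides
the whole space, which is then a member of `F`.
-/

open Filter Set TopologicalSpace Topology

theorem OmegaTypeSpace.exists_countable_opens_le {X : Type*} [TopologicalSpace X]
    (hX : OmegaTypeSpace X) {U : Opens X} (hU : U ≠ ⊤) {x : X} (hx : x ∈ U) :
    ∃ W ≤ U, (W : Set X).Countable ∧ x ∈ W := by
  obtain ⟨S, hS, hgen⟩ := hX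
  obtain ⟨s, hsS, hxs⟩ : ∃ s ∈ S, x ∈ s := by
    by_contra! h
    have hnhds : 𝓝 x = ⊤ := by
      rw [hgen, nhds_generateFrom]
      exact iInf₂_eq_top.2 fun s hs ↦ (h s hs.2 hs.1).elim
    have hUx : (U : Set X) ∈ 𝓝 x := U.isOpen.mem_nhds hx
    rw [hnhds, mem_top] at hUx
    exact hU (Opens.ext hUx)
  have hs : IsOpen s := hgen ▸ isOpen_generateFrom_of_mem hsS
  exact ⟨U ⊓ ⟨s, hs⟩, inf_le_left, (hS s hsS).mono inter_subset_right, hx, hxs⟩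

theorem ScottSober.of_forall_sSup_mem {L : Type*} [CompleteLattice L] [TopologicalSpace L]
    [IsScott L univ] (h : ∀ F : Set L, IsIrreducible F → IsClosed F → sSup F ∈ F) :
    ScottSober L := by
  rw [ScottSober, ← IsScott.topology_eq L univ]
  refine ⟨inferInstance, ⟨fun {F} hF hFc ↦ ⟨sSup F, ?_⟩⟩⟩
  rw [IsGenericPoint, IsScott.closure_singleton]
  exact Subset.antisymm ((IsScott.isLowerSet_of_isClosed hFc).Iic_subset (h F hF hFc))
    fun U hU ↦ le_sSup hU

section Opens

variable {X : Type*} [TopologicalSpace X] [TopologicalSpace (Opens X)] [IsScott (Opens X) univ]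

theorem isOpen_setOf_mem_opens (x : X) : IsOpen {U : Opens X | x ∈ U} := by
  rw [IsScott.isOpen_iff_isUpperSet_and_dirSupInaccOn (D := univ)]
  refine ⟨fun U V hUV hU ↦ hUV hU, fun d _ _ _ U hU hx ↦ ?_⟩
  rw [← hU.sSup_eq] at hx
  exact Opens.mem_sSup.1 hx

theorem exists_opens_superset_of_isIrreducible {F : Set (Opens X)} (hF : IsIrreducible F)
    {s : Set X} (hs : s.Finite) (hsF : s ⊆ (sSup F : Opens X)) : ∃ A ∈ F, s ⊆ A := by
  classical
  have hmeets (x : X) (hx : x ∈ s) : (F ∩ {U : Opens X | x ∈ U}).Nonempty :=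
    Opens.mem_sSup.1 (hsF hx)
  obtain ⟨A, hAF, hA⟩ := isIrreducible_iff_sInter.1 hF
    (hs.toFinset.image fun x ↦ {U : Opens X | x ∈ U})
    (Finset.forall_mem_image.2 fun x _ ↦ isOpen_setOf_mem_opens x)
    (Finset.forall_mem_image.2 fun x hx ↦ hmeets x (hs.mem_toFinset.1 hx))
  exact ⟨A, hAF, fun x hx ↦ hA _ (Finset.mem_image_of_mem _ (hs.mem_toFinset.2 hx))⟩

end Opens

section Scott

variable {P : Type*} [Preorder P] [TopologicalSpace P]

theorem isOpen_inter_iInter_of_finite_notMem (D : Set (Set P)) [IsScott P D] {ι : Type*}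
    {W : Set P} (hW : IsOpen W) {A : ι → Set P} (hA : ∀ i, IsOpen (A i))
    (hfin : ∀ x ∈ W, {i | x ∉ A i}.Finite) : IsOpen (W ∩ ⋂ i, A i) := by
  have hupper {U : Set P} (hU : IsOpen U) : IsUpperSet U := IsScott.isUpperSet_of_isOpen (D := D) hU
  have hinacc {U : Set P} (hU : IsOpen U) : DirSupInaccOn D U :=
    (IsScott.isOpen_iff_isUpperSet_and_dirSupInaccOn.1 hU).2
  refine (IsScott.isOpen_iff_isUpperSet_and_dirSupInaccOn (D := D)).2
    ⟨(hupper hW).inter (isUpperSet_iInter fun i ↦ hupper (hA i)), ?_⟩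
  rintro d hdD hne hd a ha ⟨haW, haA⟩
  obtain ⟨x, hxd, hxW⟩ := hinacc hW hdD hne hd ha haW
  -- Above `x` only the finitely many `A i` that omit `x` remain to be entered.
  have hfinite : IsOpen (⋂ i ∈ {i | x ∉ A i}, A i) :=
    (hfin x hxW).isOpen_biInter fun i _ ↦ hA i
  obtain ⟨y, hyd, hy⟩ := hinacc hfinite hdD hne hd ha
    (mem_iInter₂.2 fun i _ ↦ mem_iInter.1 haA i)
  obtain ⟨z, hzd, hxz, hyz⟩ := hd x hxd y hyd
  refine ⟨z, hzd, hupper hW hxz hxW, mem_iInter.2 fun i ↦ ?_⟩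
  by_cases hi : x ∈ A i
  · exact hupper (hA i) hxz hi
  · exact hupper (hA i) hyz (mem_iInter₂.1 hy i hi)

variable [TopologicalSpace (Opens P)] [IsScott (Opens P) univ]

theorem tendsto_cofinite_nhds_opens (D : Set (Set P)) [IsScott P D] {ι : Type*} {A : ι → Opens P}
    {W : Opens P} (hA : ∀ x ∈ W, ∀ᶠ i in cofinite, x ∈ A i) : Tendsto A cofinite (𝓝 W) := by
  have hopen (s : Finset ι) : IsOpen ((W : Set P) ∩ ⋂ i : {i // i ∉ s}, (A i : Set P)) :=
    isOpen_inter_iInter_of_finite_notMem D W.isOpen (fun i ↦ (A i).isOpen) fun x hx ↦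
      Subtype.val_injective.tendsto_cofinite.eventually (hA x hx)
  let B (s : Finset ι) : Opens P := ⟨_, hopen s⟩
  have hBW (s : Finset ι) : B s ≤ W := fun x hx ↦ hx.1
  have hBA {s : Finset ι} {i : ι} (hi : i ∉ s) : B s ≤ A i :=
    fun x hx ↦ mem_iInter.1 hx.2 ⟨i, hi⟩
  have hBmono : Monotone B := fun s t hst x hx ↦
    ⟨hx.1, mem_iInter.2 fun i ↦ hBA (fun hi ↦ i.2 (hst hi)) hx⟩
  have hBlub : IsLUB (range B) W := by
    refine ⟨forall_mem_range.2 hBW, fun V hV x hx ↦ ?_⟩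
    have hfin : {i | x ∉ A i}.Finite := hA x hx
    refine hV (mem_range_self hfin.toFinset) ⟨hx, mem_iInter.2 fun i ↦ ?_⟩
    simpa using i.2
  refine tendsto_nhds.2 fun 𝒰 h𝒰 hW𝒰 ↦ ?_
  rw [IsScott.isOpen_iff_isUpperSet_and_dirSupInaccOn (D := univ)] at h𝒰
  obtain ⟨_, ⟨s, rfl⟩, hs⟩ := h𝒰.2 (mem_univ _) (range_nonempty B)
    (directedOn_range.2 hBmono.directed_le) hBlub hW𝒰
  exact s.eventually_cofinite_notMem.mono fun i hi ↦ h𝒰.1 (hBA hi) hs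

theorem mem_closure_opens_of_countable (D : Set (Set P)) [IsScott P D] {F : Set (Opens P)}
    {W : Opens P} (hW : (W : Set P).Countable) (hF : ∀ s ⊆ (W : Set P), s.Finite → ∃ A ∈ F, s ⊆ A) :
    W ∈ closure F := by
  obtain ⟨e, he⟩ := countable_iff_exists_injOn.1 hW
  have hinit (n : ℕ) : ((W : Set P) ∩ e ⁻¹' Iic n).Finite :=
    .of_injOn (f := e) (fun _ hx ↦ hx.2) (he.mono inter_subset_left) (finite_Iic n)
  choose A hAF hA using fun n ↦ hF _ inter_subset_left (hinit n)
  have hlim : Tendsto A cofinite (𝓝 W) := tendsto_cofinite_nhds_opens D fun x hx ↦ by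
    rw [Nat.cofinite_eq_atTop]
    exact (eventually_ge_atTop (e x)).mono fun n hn ↦ hA n ⟨hx, hn⟩
  exact mem_closure_of_tendsto hlim (.of_forall hAF)

theorem OmegaTypeSpace.sSup_opens_mem (D : Set (Set P)) [IsScott P D] (hP : OmegaTypeSpace P)
    {F : Set (Opens P)} (hF : IsIrreducible F) (hFc : IsClosed F) : sSup F ∈ F := by
  by_cases htop : ⊤ ∈ F
  · rwa [top_le_iff.1 (le_sSup htop)]
  let C : Set (Opens P) := {W | (W : Set P).Countable ∧ W ≤ sSup F}
  have hCF : C ⊆ F := fun W hW ↦ hFc.closure_subset <|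
    mem_closure_opens_of_countable D hW.1 fun s hs hfin ↦
      exists_opens_superset_of_isIrreducible hF hfin (hs.trans hW.2)
  have hCsup : SupClosed C := fun U hU V hV ↦ ⟨hU.1.union hV.1, sup_le hU.2 hV.2⟩
  have hClub : IsLUB C (sSup F) := by
    refine ⟨fun W hW ↦ hW.2, fun V hV x hx ↦ ?_⟩
    obtain ⟨A, hAF, hxA⟩ := Opens.mem_sSup.1 hx
    obtain ⟨W, hWA, hW, hxW⟩ := hP.exists_countable_opens_le (ne_of_mem_of_not_mem hAF htop) hxA
    exact hV ⟨hW, hWA.trans (le_sSup hAF)⟩ hxW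
  exact IsScott.dirSupClosed_of_isClosed hFc hCF ⟨⊥, by simp [C]⟩ hCsup.directedOn hClub

end Scott

theorem stmt14_general {P : Type*} [Preorder P] [TopologicalSpace P] (D : Set (Set P))
    [IsScott P D] (hP : OmegaTypeSpace P) : ScottSober (Opens P) := by
  let : TopologicalSpace (Opens P) := scott (Opens P) univ
  have : IsScott (Opens P) univ := ⟨rfl⟩
  exact .of_forall_sSup_mem fun _ hF hFc ↦ hP.sSup_opens_mem D hF hFc

/-- Let P be a poset such that ΣP is an ω type space. Then the complete
lattice σ(P) of Scott-open subsets of P (here `Opens P` with P carrying its Scott topology),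
equipped with the Scott topology, is sober. -/
theorem stmt14 {P : Type*} [PartialOrder P]
    [TopologicalSpace P] [Topology.IsScott P Set.univ]
    (hP : OmegaTypeSpace P) :
    ScottSober (TopologicalSpace.Opens P) :=
  stmt14_general univ hP
end
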